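/- Let t ≥ 3 be an integer. Then there exists a 2-coloring χ : {1, …, 6t³ + 2t² + 4t − 1} → {0,1} admitting no solution x, y, z in {1,…,6t³+2t²+4t−1} to tx + (2t+1)y = z with χ(x) = χ(y) = χ(z) = 0 and no solution x, y, z to tx + ty = z with χ(x) = χ(y) = χ(z) = 1. Consequently RR_t(2t+1, t) ≥ 6t³ + 2t² + 4t. -/

import Mathlib

/-!
Color 0 is given to `1`, `2`, to `6t`, `6t + 1` and everything in `[6t + 3, 6t² + 2t]`, and above
`6t² + 2t` only to those multiples of `t` that are needed to block color 1.

In color 0, the values of `tx + (2t + 1)y` with `x, y ∈ {1, 2}` fall into the gaps below `6t + 3`.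
If `x` or `y` is at least `6t`, the value exceeds `6t² + 2t`, so it has color 0 only if `t` divides
it, hence divides `y`; then `y ≥ 6t` and the value is beyond the last element of color 0.

In color 1, the elements up to `6t² + 2t` are `[3, 6t - 1] ∪ {6t + 2}`. The sums of two of them lie
in `[6, 12t + 1] ∪ {12t + 4}`, and `t` times such a sum has color 0. So a solution of
`tx + ty = z` needs an element above `6t² + 2t`, which gives `z ≥ t(3 + 6t² + 2t + 1)`.
-/

section MonochromaticSolution

variable {κ : Type*} {a₁ b₁ a₂ b₂ M N : ℕ} {χ : ℕ → κ} {c₁ c₂ : κ}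

/-- `a * x + b * y = z` has a solution in `{1, …, N}` that is monochromatic of color `c`. The
coloring is defined on all of `ℕ`, so that it can be compared on different initial segments. -/
def HasMonochromaticSolution (a b : ℕ) (χ : ℕ → κ) (c : κ) (N : ℕ) : Prop :=
  ∃ x y z : ℕ, x ∈ Finset.Icc 1 N ∧ y ∈ Finset.Icc 1 N ∧ z ∈ Finset.Icc 1 N ∧
    a * x + b * y = z ∧ χ x = c ∧ χ y = c ∧ χ z = c

theorem HasMonochromaticSolution.mono (h : HasMonochromaticSolution a₁ b₁ χ c₁ M) (hMN : M ≤ N) :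
    HasMonochromaticSolution a₁ b₁ χ c₁ N := by
  obtain ⟨x, y, z, hx, hy, hz, hsol⟩ := h
  have hsub : Finset.Icc 1 M ⊆ Finset.Icc 1 N := Finset.Icc_subset_Icc_right hMN
  exact ⟨x, y, z, hsub hx, hsub hy, hsub hz, hsol⟩

theorem lt_of_hasMonochromaticSolution_or (h₁ : ¬ HasMonochromaticSolution a₁ b₁ χ c₁ N)
    (h₂ : ¬ HasMonochromaticSolution a₂ b₂ χ c₂ N)
    (hM : HasMonochromaticSolution a₁ b₁ χ c₁ M ∨ HasMonochromaticSolution a₂ b₂ χ c₂ M) :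
    N < M := by
  by_contra! hMN
  exact hM.elim (fun hsol => h₁ (hsol.mono hMN)) (fun hsol => h₂ (hsol.mono hMN))

end MonochromaticSolution

theorem dvd_mul_add_mul_iff_of_coprime {a b : ℕ} (hab : a.Coprime b) (x y : ℕ) :
    a ∣ a * x + b * y ↔ a ∣ y :=
  (Nat.dvd_add_right (dvd_mul_right a x)).trans hab.dvd_mul_left

/-- The color class 0 of `anomalousColoring`. Its elements above `6 * t ^ 2 + 2 * t` are the
products `t * (x + y)` beyond the interval with `x, y ≤ 6 * t ^ 2 + 2 * t` of color 1. -/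
def zeroClass (t : ℕ) : Finset ℕ :=
  {1, 2, 6 * t, 6 * t + 1} ∪ Finset.Icc (6 * t + 3) (6 * t ^ 2 + 2 * t) ∪
    {n ∈ Finset.Ioc (6 * t ^ 2 + 2 * t) (12 * t ^ 2 + t) | t ∣ n} ∪ {12 * t ^ 2 + 4 * t}

/-- The 2-coloring that witnesses the lower bound: color 0 on `zeroClass t`, color 1 elsewhere. -/
def anomalousColoring (t n : ℕ) : Fin 2 :=
  if n ∈ zeroClass t then 0 else 1

section ZeroClass

variable {t n x y : ℕ}

theorem anomalousColoring_eq_zero_iff : anomalousColoring t n = 0 ↔ n ∈ zeroClass t := by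
  simp [anomalousColoring]

theorem anomalousColoring_eq_one_iff : anomalousColoring t n = 1 ↔ n ∉ zeroClass t := by
  simp [anomalousColoring]

theorem mem_zeroClass_iff :
    n ∈ zeroClass t ↔ (n = 1 ∨ n = 2 ∨ n = 6 * t ∨ n = 6 * t + 1) ∨
      (6 * t + 3 ≤ n ∧ n ≤ 6 * t ^ 2 + 2 * t) ∨
      ((6 * t ^ 2 + 2 * t < n ∧ n ≤ 12 * t ^ 2 + t) ∧ t ∣ n) ∨ n = 12 * t ^ 2 + 4 * t := by
  simp only [zeroClass, Finset.mem_union, Finset.mem_insert, Finset.mem_singleton, Finset.mem_Icc,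
    Finset.mem_filter, Finset.mem_Ioc, or_assoc]

theorem eq_one_or_eq_two_or_le_of_mem_zeroClass (hn : n ∈ zeroClass t) :
    n = 1 ∨ n = 2 ∨ 6 * t ≤ n := by
  have htt : t ≤ t ^ 2 := Nat.le_self_pow two_ne_zero t
  rw [mem_zeroClass_iff] at hn
  omega

theorem le_of_mem_zeroClass (ht : 0 < t) (hn : n ∈ zeroClass t) : n ≤ 12 * t ^ 2 + 4 * t := by
  have htt : t ≤ t ^ 2 := Nat.le_self_pow two_ne_zero t
  rw [mem_zeroClass_iff] at hn
  omega

theorem dvd_of_mem_zeroClass_of_lt (ht : 0 < t) (hn : n ∈ zeroClass t)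
    (hlt : 6 * t ^ 2 + 2 * t < n) : t ∣ n := by
  have htt : t ≤ t ^ 2 := Nat.le_self_pow two_ne_zero t
  have hlast : t ∣ 12 * t ^ 2 + 4 * t := ⟨12 * t + 4, by ring⟩
  rw [mem_zeroClass_iff] at hn
  rcases hn with hsmall | hinterval | ⟨-, hdvd⟩ | rfl
  · omega
  · omega
  · exact hdvd
  · exact hlast

theorem mul_add_mul_notMem_zeroClass_of_small (ht : 3 ≤ t) (hx : x = 1 ∨ x = 2)
    (hy : y = 1 ∨ y = 2) : t * x + (2 * t + 1) * y ∉ zeroClass t := by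
  have htt : t ≤ t ^ 2 := Nat.le_self_pow two_ne_zero t
  rw [mem_zeroClass_iff]
  rcases hx with rfl | rfl <;> rcases hy with rfl | rfl <;> omega

theorem mul_add_mul_notMem_zeroClass_of_large (ht : 3 ≤ t) (hy : y ∈ zeroClass t)
    (hlarge : 6 * t ^ 2 + 2 * t < t * x + (2 * t + 1) * y) :
    t * x + (2 * t + 1) * y ∉ zeroClass t := by
  intro hz
  have hcoprime : t.Coprime (2 * t + 1) := by simp
  have hdvd : t ∣ y := (dvd_mul_add_mul_iff_of_coprime hcoprime x y).1
    (dvd_of_mem_zeroClass_of_lt (by omega) hz hlarge)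
  have hy_large : 6 * t ≤ y := by
    rcases eq_one_or_eq_two_or_le_of_mem_zeroClass hy with rfl | rfl | hle
    · exact absurd (Nat.le_of_dvd one_pos hdvd) (by omega)
    · exact absurd (Nat.le_of_dvd two_pos hdvd) (by omega)
    · exact hle
  have hz_le : t * x + (2 * t + 1) * y ≤ 12 * t ^ 2 + 4 * t := le_of_mem_zeroClass (by omega) hz
  nlinarith

theorem mul_add_mul_notMem_zeroClass (ht : 3 ≤ t) (hx : x ∈ zeroClass t) (hy : y ∈ zeroClass t) :
    t * x + (2 * t + 1) * y ∉ zeroClass t := by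
  have hx_cases := eq_one_or_eq_two_or_le_of_mem_zeroClass hx
  have hy_cases := eq_one_or_eq_two_or_le_of_mem_zeroClass hy
  rw [← or_assoc] at hx_cases hy_cases
  rcases hx_cases with hx_small | hx_large
  · rcases hy_cases with hy_small | hy_large
    · exact mul_add_mul_notMem_zeroClass_of_small ht hx_small hy_small
    · exact mul_add_mul_notMem_zeroClass_of_large ht hy (by nlinarith)
  · have hy_pos : 1 ≤ y := by omega
    exact mul_add_mul_notMem_zeroClass_of_large ht hy (by nlinarith)

theorem three_le_of_notMem_zeroClass (hn : n ∉ zeroClass t) (hpos : 1 ≤ n) : 3 ≤ n := by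
  rw [mem_zeroClass_iff] at hn
  omega

theorem lt_or_eq_of_notMem_zeroClass (hn : n ∉ zeroClass t) (hle : n ≤ 6 * t ^ 2 + 2 * t) :
    n < 6 * t ∨ n = 6 * t + 2 := by
  rw [mem_zeroClass_iff] at hn
  omega

theorem mul_mem_zeroClass {s : ℕ} (ht : 3 ≤ t) (hs : 6 ≤ s)
    (hs_cases : s ≤ 12 * t + 1 ∨ s = 12 * t + 4) : t * s ∈ zeroClass t := by
  rw [mem_zeroClass_iff]
  rcases hs_cases with hle | rfl
  · have hlower : 6 * t ≤ t * s := by nlinarith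
    have hupper : t * s ≤ 12 * t ^ 2 + t := by nlinarith
    have hne : t * s ≠ 6 * t + 2 := by
      intro heq
      have hdvd : t ∣ 2 := (Nat.dvd_add_right (dvd_mul_left t 6)).1 (heq ▸ dvd_mul_right t s)
      exact absurd (Nat.le_of_dvd two_pos hdvd) (by omega)
    have hdvd : t ∣ t * s := dvd_mul_right t s
    omega
  · have hlast : t * (12 * t + 4) = 12 * t ^ 2 + 4 * t := by ring
    omega

theorem le_of_mul_add_mul_lt (hy : 3 ≤ y)
    (hlt : t * x + t * y < 6 * t ^ 3 + 2 * t ^ 2 + 4 * t) : x ≤ 6 * t ^ 2 + 2 * t := by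
  have hmul : t * (x + y) < t * (6 * t ^ 2 + 2 * t + 4) := by linarith
  have hadd : x + y < 6 * t ^ 2 + 2 * t + 4 := Nat.lt_of_mul_lt_mul_left hmul
  omega

theorem mul_add_mul_mem_zeroClass (ht : 3 ≤ t) (hx : x ∉ zeroClass t) (hy : y ∉ zeroClass t)
    (hx_pos : 1 ≤ x) (hy_pos : 1 ≤ y)
    (hlt : t * x + t * y < 6 * t ^ 3 + 2 * t ^ 2 + 4 * t) : t * x + t * y ∈ zeroClass t := by
  have hx_ge : 3 ≤ x := three_le_of_notMem_zeroClass hx hx_pos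
  have hy_ge : 3 ≤ y := three_le_of_notMem_zeroClass hy hy_pos
  have hx_cases : x < 6 * t ∨ x = 6 * t + 2 :=
    lt_or_eq_of_notMem_zeroClass hx (le_of_mul_add_mul_lt hy_ge hlt)
  have hy_cases : y < 6 * t ∨ y = 6 * t + 2 :=
    lt_or_eq_of_notMem_zeroClass hy (le_of_mul_add_mul_lt hx_ge (add_comm (t * x) _ ▸ hlt))
  rw [← mul_add]
  exact mul_mem_zeroClass ht (by omega) (by omega)

theorem not_hasMonochromaticSolution_anomalousColoring_zero (ht : 3 ≤ t) (N : ℕ) :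
    ¬ HasMonochromaticSolution t (2 * t + 1) (anomalousColoring t) 0 N := by
  rintro ⟨x, y, _, -, -, -, rfl, hx, hy, hz⟩
  rw [anomalousColoring_eq_zero_iff] at hx hy hz
  exact mul_add_mul_notMem_zeroClass ht hx hy hz

theorem not_hasMonochromaticSolution_anomalousColoring_one (ht : 3 ≤ t) :
    ¬ HasMonochromaticSolution t t (anomalousColoring t) 1
      (6 * t ^ 3 + 2 * t ^ 2 + 4 * t - 1) := by
  rintro ⟨x, y, _, hxN, hyN, hzN, rfl, hx, hy, hz⟩
  rw [anomalousColoring_eq_one_iff] at hx hy hz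
  rw [Finset.mem_Icc] at hxN hyN hzN
  exact hz (mul_add_mul_mem_zeroClass ht hx hy hxN.1 hyN.1 (by omega))

end ZeroClass

/-- Theorem 3.3 (second): for `t ≥ 3`, there is a 2-coloring of
`[1, 6t³+2t²+4t-1]` with no solution to `tx + (2t+1)y = z` monochromatic of
color 0 and no solution to `tx + ty = z` monochromatic of color 1;
consequently `RR_t(2t+1, t) ≥ 6t³ + 2t² + 4t`. -/
theorem RR_lower_bound_anomalous (t : ℕ) (ht : 3 ≤ t) :
    (∃ χ : ℕ → Fin 2,
      (¬ ∃ x y z : ℕ,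
        x ∈ Finset.Icc 1 (6 * t ^ 3 + 2 * t ^ 2 + 4 * t - 1) ∧
        y ∈ Finset.Icc 1 (6 * t ^ 3 + 2 * t ^ 2 + 4 * t - 1) ∧
        z ∈ Finset.Icc 1 (6 * t ^ 3 + 2 * t ^ 2 + 4 * t - 1) ∧
        t * x + (2 * t + 1) * y = z ∧ χ x = 0 ∧ χ y = 0 ∧ χ z = 0) ∧
      (¬ ∃ x y z : ℕ,
        x ∈ Finset.Icc 1 (6 * t ^ 3 + 2 * t ^ 2 + 4 * t - 1) ∧
        y ∈ Finset.Icc 1 (6 * t ^ 3 + 2 * t ^ 2 + 4 * t - 1) ∧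
        z ∈ Finset.Icc 1 (6 * t ^ 3 + 2 * t ^ 2 + 4 * t - 1) ∧
        t * x + t * y = z ∧ χ x = 1 ∧ χ y = 1 ∧ χ z = 1)) ∧
    (∀ M : ℕ, 0 < M →
      (∀ χ : ℕ → Fin 2,
        (∃ x y z : ℕ, x ∈ Finset.Icc 1 M ∧ y ∈ Finset.Icc 1 M ∧
          z ∈ Finset.Icc 1 M ∧ t * x + (2 * t + 1) * y = z ∧
          χ x = 0 ∧ χ y = 0 ∧ χ z = 0) ∨
        (∃ x y z : ℕ, x ∈ Finset.Icc 1 M ∧ y ∈ Finset.Icc 1 M ∧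
          z ∈ Finset.Icc 1 M ∧ t * x + t * y = z ∧
          χ x = 1 ∧ χ y = 1 ∧ χ z = 1)) →
      6 * t ^ 3 + 2 * t ^ 2 + 4 * t ≤ M) := by
  have hzero := not_hasMonochromaticSolution_anomalousColoring_zero ht
    (6 * t ^ 3 + 2 * t ^ 2 + 4 * t - 1)
  have hone := not_hasMonochromaticSolution_anomalousColoring_one ht
  refine ⟨⟨anomalousColoring t, hzero, hone⟩, fun M _ hM => ?_⟩
  exact Nat.le_of_pred_lt (lt_of_hasMonochromaticSolution_or hzero hone (hM (anomalousColoring t)))
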